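/- The quotient group BW16♯/BW16 has exactly 2^8 = 256 elements, and its cosets consist of: the zero coset; exactly 135 cosets whose minimal norm (the minimum of ‖x‖² over x in the coset) equals 2; and exactly 120 cosets whose minimal norm equals 3. -/

import Mathlib

noncomputable section

open scoped RealInnerProductSpace

/-- `ℝ^n` with the standard inner product. -/
abbrev E (n : ℕ) := EuclideanSpace ℝ (Fin n)

/-- The standard basis vector `ε i`. -/
def εv {n : ℕ} (i : Fin n) : E n := EuclideanSpace.single i 1

/-- The vector of `ℝ^n` with the given coordinates. -/
def vec {n : ℕ} (x : Fin n → ℝ) : E n := (WithLp.equiv 2 (Fin n → ℝ)).symm x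

/-- The vector of `ℝ^n` with the given integer coordinates. -/
def intVec {n : ℕ} (x : Fin n → ℤ) : E n := (WithLp.equiv 2 (Fin n → ℝ)).symm fun i => (x i : ℝ)

/-- A lattice is integral if all pairwise inner products of its elements are integers. -/
def LatticeIsIntegral {n : ℕ} (L : Submodule ℤ (E n)) : Prop :=
  ∀ x ∈ L, ∀ y ∈ L, ∃ k : ℤ, ⟪x, y⟫ = (k : ℝ)

/-- Two lattices are isometric if a linear isometry of the ambient space carries
one onto the other. -/
def IsometricLattices {n : ℕ} (L M : Submodule ℤ (E n)) : Prop :=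
  ∃ g : E n ≃ₗᵢ[ℝ] E n, g '' (L : Set (E n)) = (M : Set (E n))

/-- The dual lattice `Λ♯ = {x : ⟪x,y⟫ ∈ ℤ for all y ∈ Λ}`. -/
def dualLattice {n : ℕ} (Λ : Submodule ℤ (E n)) : Submodule ℤ (E n) where
  carrier := {x | ∀ y ∈ Λ, ∃ k : ℤ, ⟪x, y⟫ = (k : ℝ)}
  zero_mem' := fun y _ => ⟨0, by simp⟩
  add_mem' := by
    intro a b ha hb y hy
    obtain ⟨k, hk⟩ := ha y hy
    obtain ⟨l, hl⟩ := hb y hy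
    exact ⟨k + l, by rw [inner_add_left, hk, hl]; push_cast; ring⟩
  smul_mem' := by
    intro c x hx y hy
    obtain ⟨k, hk⟩ := hx y hy
    refine ⟨c * k, ?_⟩
    rw [← Int.cast_smul_eq_zsmul ℝ c x, real_inner_smul_left, hk]
    push_cast
    ring

/-- The quotient abelian group `Λ♯/Λ`. -/
abbrev DualQuot {n : ℕ} (Λ : Submodule ℤ (E n)) :=
  (dualLattice Λ) ⧸ (Λ.comap (dualLattice Λ).subtype)

/-- The coset `c ∈ Λ♯/Λ` has minimal norm `m`, i.e. `m` is the minimum of `‖x‖²`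
over `x` in the coset `c`. -/
def CosetMinNorm {n : ℕ} (Λ : Submodule ℤ (E n)) (c : DualQuot Λ) (m : ℝ) : Prop :=
  IsLeast {r : ℝ | ∃ x : dualLattice Λ, Submodule.Quotient.mk x = c ∧ r = ‖(x : E n)‖ ^ 2} m

def f0 : E 16 :=
  vec ![-1/2, 1/2, 1/2, 1/2, 1/2, 1/2, 1/2, 1/2, -1/2, 1/2, 1/2, 1/2, 1/2, 1/2, 1/2, 1/2]

def g1 : E 16 := εv 0 + εv 4 + εv 8 + εv 12
def g2 : E 16 := εv 0 + εv 2 + εv 4 + εv 6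
def g3 : E 16 := εv 0 + εv 2 + εv 8 + εv 10
def g4 : E 16 := εv 0 + εv 2 + εv 12 + εv 14
def g5 : E 16 := εv 0 + εv 1 + εv 2 + εv 3
def g6 : E 16 := εv 0 + εv 1 + εv 4 + εv 5
def g7 : E 16 := εv 0 + εv 1 + εv 6 + εv 7
def g8 : E 16 := εv 0 + εv 1 + εv 8 + εv 9
def g9 : E 16 := εv 0 + εv 1 + εv 10 + εv 11
def g10 : E 16 := εv 0 + εv 1 + εv 12 + εv 13
def g11 : E 16 := εv 0 + εv 1 + εv 14 + εv 15

/-- The Barnes-Wall lattice `BW₁₆ = ⟨2ε1, …, 2ε16, f0, g1, …, g11⟩`. -/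
def BW16 : Submodule ℤ (E 16) :=
  Submodule.span ℤ ((Set.range fun i : Fin 16 => (2 : ℝ) • εv i) ∪
    {f0, g1, g2, g3, g4, g5, g6, g7, g8, g9, g10, g11})

/-!
After changing the signs of two coordinates, which turns `f0` into half of the all-one vector,
`BW16♯` consists of the vectors `h / 2` with `h` an integer vector whose parities form a word of the
Reed–Muller code `RM(1, 4)` and whose entries have sum divisible by `4`. Its sublattice `BW16` is
even, and is given by the conditions that the parities of `h` are constant and that the sums of the
entries of `h` over `𝔽₂⁴` and over its affine hyperplanes `x_k = 1` are divisible by `4`; this uses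
the duality of `RM(1, 4)` and `RM(2, 4)`. Hence a coset is determined by a pair `(c, s)` of vectors
of `𝔽₂⁴`, where `c` is the linear part of the parities and `s` records the hyperplane sums modulo
`4`.

Norms in a coset are congruent modulo `2` and nonzero vectors of `BW16♯` have norm at least `2`, so
a vector of norm less than `4` in a nonzero coset has minimal norm there. The coset of
`(c, s) ≠ (0, 0)` has a representative of norm `2 + c · s`, with `c · s ∈ {0, 1}`, and the
hyperbolic quadratic form `c · s` has `135` nonzero singular and `120` nonsingular vectors.
-/

section Lattice

variable {n : ℕ} {Λ : Submodule ℤ (E n)}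

lemma mem_dualLattice_span_iff {S : Set (E n)} {x : E n} :
    x ∈ dualLattice (Submodule.span ℤ S) ↔ ∀ y ∈ S, ∃ k : ℤ, ⟪x, y⟫ = (k : ℝ) := by
  refine ⟨fun hx y hy => hx y (Submodule.subset_span hy), fun hx y hy => ?_⟩
  induction hy using Submodule.span_induction with
  | mem y hy => exact hx y hy
  | zero => exact ⟨0, by simp⟩
  | add y z _ _ hy hz =>
    obtain ⟨k, hk⟩ := hy
    obtain ⟨l, hl⟩ := hz
    exact ⟨k + l, by rw [inner_add_right, hk, hl, Int.cast_add]⟩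
  | smul a y _ hy =>
    obtain ⟨k, hk⟩ := hy
    exact ⟨a * k, by
      rw [← Int.cast_smul_eq_zsmul ℝ, real_inner_smul_right, hk, Int.cast_mul]⟩

/-- A lattice is even if all its elements have even norm `‖x‖²`. -/
def LatticeIsEven (Λ : Submodule ℤ (E n)) : Prop :=
  ∀ x ∈ Λ, ∃ k : ℤ, ‖x‖ ^ 2 = 2 * (k : ℝ)

lemma latticeIsEven_span {S : Set (E n)} (hint : S ⊆ dualLattice (Submodule.span ℤ S))
    (heven : ∀ x ∈ S, ∃ k : ℤ, ‖x‖ ^ 2 = 2 * (k : ℝ)) :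
    LatticeIsEven (Submodule.span ℤ S) := by
  intro x hx
  induction hx using Submodule.span_induction with
  | mem x hx => exact heven x hx
  | zero => exact ⟨0, by simp⟩
  | add x y hx hy hx2 hy2 =>
    obtain ⟨k, hk⟩ := hx2
    obtain ⟨l, hl⟩ := hy2
    obtain ⟨m, hm⟩ := Submodule.span_le.2 hint hx y hy
    exact ⟨k + m + l, by rw [norm_add_sq_real, hk, hl, hm]; push_cast; ring⟩
  | smul a x _ hx =>
    obtain ⟨k, hk⟩ := hx
    exact ⟨a ^ 2 * k, by
      rw [← Int.cast_smul_eq_zsmul ℝ, norm_smul, mul_pow, hk, Real.norm_eq_abs, sq_abs]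
      push_cast
      ring⟩

lemma mk_eq_mk_iff_sub_mem {x y : dualLattice Λ} :
    (Submodule.Quotient.mk x : DualQuot Λ) = Submodule.Quotient.mk y ↔ (x : E n) - y ∈ Λ :=
  Submodule.Quotient.eq _

lemma LatticeIsEven.norm_sq_congr (hΛ : LatticeIsEven Λ) {x y : E n} (hx : x ∈ dualLattice Λ)
    (hyx : y - x ∈ Λ) : ∃ k : ℤ, ‖y‖ ^ 2 = ‖x‖ ^ 2 + 2 * (k : ℝ) := by
  obtain ⟨k, hk⟩ := hΛ _ hyx
  obtain ⟨l, hl⟩ := hx _ hyx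
  refine ⟨l + k, ?_⟩
  rw [← add_sub_cancel x y, norm_add_sq_real, hk, hl]
  push_cast
  ring

lemma cosetMinNorm_zero (Λ : Submodule ℤ (E n)) : CosetMinNorm Λ 0 0 := by
  refine ⟨⟨0, rfl, by simp⟩, ?_⟩
  rintro _ ⟨x, -, rfl⟩
  positivity

lemma LatticeIsEven.cosetMinNorm_mk (hΛ : LatticeIsEven Λ) {m : ℝ}
    (hm : ∀ x ∈ dualLattice Λ, x ≠ 0 → m ≤ ‖x‖ ^ 2) {x : dualLattice Λ}
    (hx : (Submodule.Quotient.mk x : DualQuot Λ) ≠ 0) (hxm : ‖(x : E n)‖ ^ 2 < m + 2) :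
    CosetMinNorm Λ (Submodule.Quotient.mk x) (‖(x : E n)‖ ^ 2) := by
  refine ⟨⟨x, rfl, rfl⟩, ?_⟩
  rintro _ ⟨y, hyx, rfl⟩
  obtain ⟨k, hk⟩ := hΛ.norm_sq_congr x.2 (mk_eq_mk_iff_sub_mem.1 hyx)
  have hy : (y : E n) ≠ 0 := by
    intro hy
    obtain rfl : y = 0 := Subtype.ext hy
    exact hx hyx.symm
  have hk1 : -1 < k := by
    have : (-1 : ℝ) < k := by linarith [hm y y.2 hy]
    exact_mod_cast this
  have hk0 : (0 : ℝ) ≤ k := by exact_mod_cast (show 0 ≤ k by omega)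
  linarith

lemma ncard_setOf_cosetMinNorm {β : Type*} {f : β → DualQuot Λ} (hf : f.Bijective) {N : β → ℝ}
    (hN : ∀ b, CosetMinNorm Λ (f b) (N b)) (m : ℝ) :
    {c | CosetMinNorm Λ c m}.ncard = {b | N b = m}.ncard := by
  rw [← Set.ncard_image_of_injective _ hf.injective]
  congr 1
  ext c
  obtain ⟨b, rfl⟩ := hf.surjective c
  rw [hf.injective.mem_set_image]
  exact ⟨(hN b).unique, fun hb : N b = m => hb ▸ hN b⟩

end Lattice

section Code

lemma mem_span_range_of_forall_dotProduct_eq_zero {K ι n : Type*} [Field K] [Fintype n]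
    {v : ι → n → K} {y : n → K} (h : ∀ p, (∀ j, v j ⬝ᵥ p = 0) → y ⬝ᵥ p = 0) :
    y ∈ Submodule.span K (Set.range v) := by
  classical
  rw [← Subspace.forall_mem_dualAnnihilator_apply_eq_zero_iff]
  intro φ hφ
  obtain ⟨p, rfl⟩ := (dotProductEquiv K n).surjective φ
  rw [Submodule.mem_dualAnnihilator] at hφ
  simp only [dotProductEquiv_apply_apply, dotProduct_comm p] at hφ ⊢
  exact h p fun j => hφ _ (Submodule.subset_span ⟨j, rfl⟩)

lemma exists_eq_sum_smul_add_of_intCast_mem_span {ι n : Type*} [Fintype ι] {p : ℕ}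
    {v : ι → n → ℤ} {u : n → ℤ}
    (hu : (fun i => (u i : ZMod p)) ∈
      Submodule.span (ZMod p) (Set.range fun j i => (v j i : ZMod p))) :
    ∃ (a : ι → ℤ) (z : n → ℤ), u = ∑ j, a j • v j + (p : ℤ) • z := by
  obtain ⟨b, hb⟩ := (Submodule.mem_span_range_iff_exists_fun _).1 hu
  choose a ha using fun j => ZMod.intCast_surjective (b j)
  have hdvd (i : n) : (p : ℤ) ∣ u i - ∑ j, a j * v j i := by
    rw [← ZMod.intCast_eq_intCast_iff_dvd_sub, ← congr_fun hb i]
    simp [ha]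
  choose z hz using hdvd
  refine ⟨a, z, funext fun i => ?_⟩
  simp only [Pi.add_apply, Finset.sum_apply, Pi.smul_apply, smul_eq_mul]
  linarith [hz i]

lemma dotProduct_self_intCast_zmod_two {n : Type*} [Fintype n] (y : n → ℤ) :
    ((y ⬝ᵥ y : ℤ) : ZMod 2) = ((1 ⬝ᵥ y : ℤ) : ZMod 2) := by
  have hsq : ∀ t : ZMod 2, t * t = t := by decide
  simp [dotProduct, hsq]

lemma card_odd_le_dotProduct_self {n : Type*} [Fintype n] (h : n → ℤ) :
    (Finset.card {i | (h i : ZMod 2) ≠ 0} : ℤ) ≤ h ⬝ᵥ h := by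
  rw [Finset.card_filter, Nat.cast_sum]
  refine Finset.sum_le_sum fun i _ => ?_
  split_ifs with hi
  · have : h i ≠ 0 := fun h0 => hi (by simp [h0])
    simpa using Int.add_one_le_iff.2 (mul_self_pos.2 this)
  · simpa using mul_self_nonneg (h i)

/-- Vectors over `𝔽₂` indexed by binary digits: the positions `0, …, 15` are identified with the
points of `𝔽₂⁴`, and linear forms on `𝔽₂⁴` are given by their coefficients. -/
abbrev Bits := Fin 4 → ZMod 2

/-- The point of `𝔽₂⁴` at position `i`. -/
def bits (i : Fin 16) : Bits := fun k => if i.val.testBit k.val then 1 else 0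

/-- The `k`-th coordinate function on the points of `𝔽₂⁴`, with values in `{0, 1} ⊆ ℤ`. -/
def coord (k : Fin 4) : Fin 16 → ℤ := fun i => (bits i k).val

lemma intCast_coord (k : Fin 4) (i : Fin 16) : (coord k i : ZMod 2) = bits i k := by
  simp [coord]

/-- The codewords of the Reed–Muller code `RM(1, 4)`, i.e. the affine functions on `𝔽₂⁴`. -/
def IsAffine (p : Fin 16 → ZMod 2) : Prop :=
  ∃ (a : ZMod 2) (c : Bits), ∀ i, p i = a + c ⬝ᵥ bits i

/-- The supports of `g1, …, g11`, which are affine planes of `𝔽₂⁴`. -/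
def tetrad : Fin 11 → Finset (Fin 16) :=
  ![{0, 4, 8, 12}, {0, 2, 4, 6}, {0, 2, 8, 10}, {0, 2, 12, 14}, {0, 1, 2, 3}, {0, 1, 4, 5},
    {0, 1, 6, 7}, {0, 1, 8, 9}, {0, 1, 10, 11}, {0, 1, 12, 13}, {0, 1, 14, 15}]

/-- The coordinates of `g1, …, g11`. Modulo `2` they form a basis of the Reed–Muller code
`RM(2, 4)`. -/
def tetradWord (j : Fin 11) : Fin 16 → ℤ := fun i => if i ∈ tetrad j then 1 else 0

lemma sum_tetrad_affine : ∀ (j : Fin 11) (a : ZMod 2) (c : Bits),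
    ∑ i ∈ tetrad j, (a + c ⬝ᵥ bits i) = 0 := by
  decide +kernel

lemma isAffine_iff_sum_tetrad_eq_zero {p : Fin 16 → ZMod 2} :
    IsAffine p ↔ ∀ j, ∑ i ∈ tetrad j, p i = 0 := by
  constructor
  · rintro ⟨a, c, hp⟩ j
    rw [funext hp, sum_tetrad_affine]
  · intro h
    -- An affine function is determined by its values at the origin and the four unit vectors.
    refine ⟨p 0, ![p 1 - p 0, p 2 - p 0, p 4 - p 0, p 8 - p 0], fun i => ?_⟩
    simp only [Fin.forall_fin_succ, tetrad, Matrix.cons_val_zero, Finset.mem_insert, Fin.reduceEq,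
      Finset.mem_singleton, or_self, not_false_eq_true, Finset.sum_insert, Finset.sum_singleton,
      Matrix.cons_val_succ, zero_ne_one, Matrix.cons_val_fin_one, forall_const] at h
    fin_cases i <;> simp [bits, dotProduct, Fin.sum_univ_succ, Nat.testBit] <;> grind

lemma tetradWord_dotProduct (j : Fin 11) (p : Fin 16 → ZMod 2) :
    (fun i => (tetradWord j i : ZMod 2)) ⬝ᵥ p = ∑ i ∈ tetrad j, p i := by
  simp [dotProduct, tetradWord]

lemma affine_eq_zero_or_eight_le_card :
    ∀ (a : ZMod 2) (c : Bits), (∀ i, a + c ⬝ᵥ bits i = 0) ∨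
      8 ≤ Finset.card {i | a + c ⬝ᵥ bits i ≠ 0} := by
  decide +kernel

lemma eq_zero_of_forall_dotProduct_bits_eq_zero :
    ∀ c : Bits, (∀ i, c ⬝ᵥ bits i = 0) → c = 0 := by
  decide +kernel

lemma bits_zero : bits 0 = 0 := by decide

lemma dotProduct_affine (y : Fin 16 → ZMod 2) (a : ZMod 2) (c : Bits) :
    y ⬝ᵥ (fun i => a + c ⬝ᵥ bits i) = a * ∑ i, y i + ∑ k, c k * ∑ i, y i * bits i k := by
  simp only [dotProduct, mul_add, Finset.sum_add_distrib, Finset.mul_sum]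
  rw [Finset.sum_comm]
  simp only [mul_comm, mul_left_comm]

lemma mem_span_tetradWord {y : Fin 16 → ZMod 2} (hsum : ∑ i, y i = 0)
    (hcoord : ∀ k, ∑ i, y i * bits i k = 0) :
    y ∈ Submodule.span (ZMod 2) (Set.range fun j i => (tetradWord j i : ZMod 2)) := by
  refine mem_span_range_of_forall_dotProduct_eq_zero fun p hp => ?_
  simp only [tetradWord_dotProduct] at hp
  obtain ⟨a, c, hac⟩ := isAffine_iff_sum_tetrad_eq_zero.2 hp
  rw [funext hac, dotProduct_affine, hsum]
  simp [hcoord]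

end Code

section BarnesWall

lemma intVec_tetradWord : (fun j => intVec (tetradWord j)) =
    ![g1, g2, g3, g4, g5, g6, g7, g8, g9, g10, g11] := by
  have hsum (j : Fin 11) : intVec (tetradWord j) = ∑ i ∈ tetrad j, εv i := by
    ext i
    simp [intVec, tetradWord, εv, Pi.single_apply]
  funext j
  rw [hsum]
  fin_cases j <;>
    simp [tetrad, add_assoc, g1, g2, g3, g4, g5, g6, g7, g8, g9, g10, g11]

lemma BW16_eq_span : BW16 = Submodule.span ℤ
    ((Set.range fun i => intVec (Pi.single i 2)) ∪
      insert f0 (Set.range fun j => intVec (tetradWord j))) := by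
  have hε : (fun i : Fin 16 => (2 : ℝ) • εv i) = fun i => intVec (Pi.single i 2) := by
    funext i
    ext j
    by_cases hij : j = i <;> simp [εv, intVec, hij]
  rw [intVec_tetradWord, BW16, hε]
  simp only [Matrix.range_cons, Matrix.range_empty, Set.union_empty, Set.insert_eq]

lemma f0_mem_BW16 : f0 ∈ BW16 := by
  rw [BW16_eq_span]
  exact Submodule.subset_span (Or.inr (Set.mem_insert _ _))

lemma intVec_single_two_mem_BW16 (i : Fin 16) : intVec (Pi.single i 2) ∈ BW16 := by
  rw [BW16_eq_span]
  exact Submodule.subset_span (Or.inl ⟨i, rfl⟩)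

lemma intVec_tetradWord_mem_BW16 (j : Fin 11) : intVec (tetradWord j) ∈ BW16 := by
  rw [BW16_eq_span]
  exact Submodule.subset_span (Or.inr (Or.inr ⟨j, rfl⟩))

lemma intVec_mem_BW16 {u : Fin 16 → ℤ} (hsum : ∑ i, (u i : ZMod 2) = 0)
    (hcoord : ∀ k, ∑ i, (u i : ZMod 2) * bits i k = 0) : intVec u ∈ BW16 := by
  obtain ⟨a, z, rfl⟩ :=
    exists_eq_sum_smul_add_of_intCast_mem_span (mem_span_tetradWord hsum hcoord)
  have hu : intVec (∑ j, a j • tetradWord j + ((2 : ℕ) : ℤ) • z) =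
      ∑ j, a j • intVec (tetradWord j) + ∑ i, z i • intVec (Pi.single i 2) := by
    ext i
    simp [intVec, Finset.sum_apply, Pi.single_apply, mul_comm]
  rw [hu]
  exact add_mem (sum_mem fun j _ => Submodule.smul_mem _ _ (intVec_tetradWord_mem_BW16 j))
    (sum_mem fun i _ => Submodule.smul_mem _ _ (intVec_single_two_mem_BW16 i))

/-- The signs of the coordinates of `f0`. -/
def sgn : Fin 16 → ℤ := ![-1, 1, 1, 1, 1, 1, 1, 1, -1, 1, 1, 1, 1, 1, 1, 1]

lemma sgn_mul_self : ∀ i, sgn i * sgn i = 1 := by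
  decide

lemma intCast_sgn : ∀ i, (sgn i : ZMod 2) = 1 := by
  decide

/-- Integer coordinates for `BW16♯`: half of an integer vector, with the signs of `f0` inserted
so that `f0` is the image of the all-one vector. -/
def signedHalf : (Fin 16 → ℤ) →ₗ[ℤ] E 16 where
  toFun h := vec fun i => (sgn i * h i : ℝ) / 2
  map_add' a b := by
    ext i
    simp only [vec, Pi.add_apply, Int.cast_add, WithLp.equiv_symm_apply, PiLp.add_apply]
    ring
  map_smul' t a := by
    ext i
    simp only [vec, Pi.smul_apply, smul_eq_mul, Int.cast_mul, WithLp.equiv_symm_apply, eq_intCast,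
      Int.cast_eq, PiLp.smul_apply, zsmul_eq_mul]
    ring

lemma signedHalf_apply (h : Fin 16 → ℤ) (i : Fin 16) :
    signedHalf h i = (sgn i * h i : ℝ) / 2 := rfl

lemma signedHalf_one : signedHalf 1 = f0 := by
  ext i
  rw [signedHalf_apply]
  fin_cases i <;> simp [sgn, f0, vec]

lemma signedHalf_two_smul (y : Fin 16 → ℤ) : signedHalf ((2 : ℤ) • y) = intVec (sgn * y) := by
  ext i
  simp only [signedHalf_apply, intVec, Pi.mul_apply, Pi.smul_apply, smul_eq_mul, Int.cast_mul,
    Int.cast_ofNat, WithLp.equiv_symm_apply]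
  ring

lemma intVec_eq_signedHalf (u : Fin 16 → ℤ) : intVec u = signedHalf ((2 : ℤ) • (sgn * u)) := by
  rw [signedHalf_two_smul, ← mul_assoc, show sgn * sgn = 1 from funext sgn_mul_self, one_mul]

lemma inner_signedHalf (a b : Fin 16 → ℤ) :
    ⟪signedHalf a, signedHalf b⟫ = ((a ⬝ᵥ b : ℤ) : ℝ) / 4 := by
  have hsgn (i : Fin 16) : (sgn i : ℝ) * sgn i = 1 := by exact_mod_cast sgn_mul_self i
  simp only [PiLp.inner_apply, signedHalf_apply, dotProduct, Int.cast_sum, Finset.sum_div]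
  refine Finset.sum_congr rfl fun i _ => ?_
  simp only [RCLike.inner_apply, map_div₀, Real.ringHom_apply, Int.cast_mul]
  linear_combination (a i * b i / 4 : ℝ) * hsgn i

lemma norm_sq_signedHalf (h : Fin 16 → ℤ) : ‖signedHalf h‖ ^ 2 = ((h ⬝ᵥ h : ℤ) : ℝ) / 4 := by
  rw [← real_inner_self_eq_norm_sq, inner_signedHalf]

lemma exists_inner_signedHalf_eq_intCast_iff {a b : Fin 16 → ℤ} :
    (∃ k : ℤ, ⟪signedHalf a, signedHalf b⟫ = k) ↔ 4 ∣ a ⬝ᵥ b := by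
  refine exists_congr fun k => ?_
  rw [inner_signedHalf, div_eq_iff four_ne_zero, mul_comm]
  exact_mod_cast Iff.rfl

lemma exists_inner_signedHalf_intVec_eq_intCast_iff {h u : Fin 16 → ℤ} :
    (∃ k : ℤ, ⟪signedHalf h, intVec u⟫ = k) ↔
      (fun i => (u i : ZMod 2)) ⬝ᵥ (fun i => (h i : ZMod 2)) = 0 := by
  have hcast : (fun i => (u i : ZMod 2)) ⬝ᵥ (fun i => (h i : ZMod 2)) =
      ((h ⬝ᵥ (sgn * u) : ℤ) : ZMod 2) := by
    simp [dotProduct, intCast_sgn, mul_comm]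
  rw [intVec_eq_signedHalf, exists_inner_signedHalf_eq_intCast_iff, hcast,
    ZMod.intCast_zmod_eq_zero_iff_dvd, dotProduct_smul, smul_eq_mul]
  omega

lemma signedHalf_mem_dualLattice_BW16_iff {h : Fin 16 → ℤ} :
    signedHalf h ∈ dualLattice BW16 ↔ IsAffine (fun i => (h i : ZMod 2)) ∧ 4 ∣ 1 ⬝ᵥ h := by
  have hf : (∃ k : ℤ, ⟪signedHalf h, f0⟫ = k) ↔ 4 ∣ 1 ⬝ᵥ h := by
    rw [← signedHalf_one, exists_inner_signedHalf_eq_intCast_iff, dotProduct_comm]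
  have hε (i : Fin 16) : ∃ k : ℤ, ⟪signedHalf h, intVec (Pi.single i 2)⟫ = k := by
    have hzero : (fun l => ((Pi.single i 2 : Fin 16 → ℤ) l : ZMod 2)) = 0 := by
      revert i
      decide
    rw [exists_inner_signedHalf_intVec_eq_intCast_iff, hzero, zero_dotProduct]
  simp only [BW16_eq_span, mem_dualLattice_span_iff, Set.forall_mem_insert, Set.mem_union, or_imp,
    forall_and, Set.forall_mem_range, hf, hε, exists_inner_signedHalf_intVec_eq_intCast_iff,
    tetradWord_dotProduct, isAffine_iff_sum_tetrad_eq_zero, implies_true, true_and]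
  exact and_comm

lemma exists_signedHalf_eq {x : E 16} (hx : x ∈ dualLattice BW16) : ∃ h, signedHalf h = x := by
  choose k hk using fun i => hx _ (intVec_single_two_mem_BW16 i)
  refine ⟨sgn * k, ?_⟩
  ext i
  have hsgn : (sgn i : ℝ) * sgn i = 1 := by exact_mod_cast sgn_mul_self i
  have hki : 2 * x i = k i := by
    simpa [PiLp.inner_apply, intVec, Pi.single_apply] using hk i
  simp only [signedHalf_apply, Pi.mul_apply, Int.cast_mul]
  linear_combination (k i / 2 : ℝ) * hsgn - hki / 2

lemma intVec_mem_dualLattice_BW16 {u : Fin 16 → ℤ} (hu : ∑ i, (u i : ZMod 2) = 0) :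
    intVec u ∈ dualLattice BW16 := by
  rw [intVec_eq_signedHalf, signedHalf_mem_dualLattice_BW16_iff]
  refine ⟨⟨0, 0, fun i => ?_⟩, ?_⟩
  · simp [show (2 : ZMod 2) = 0 from rfl]
  · have : (2 : ℤ) ∣ 1 ⬝ᵥ (sgn * u) := by
      rw [← Nat.cast_ofNat, ← ZMod.intCast_zmod_eq_zero_iff_dvd]
      simpa [dotProduct, intCast_sgn] using hu
    rw [dotProduct_smul, smul_eq_mul]
    omega

lemma f0_mem_dualLattice_BW16 : f0 ∈ dualLattice BW16 := by
  rw [← signedHalf_one, signedHalf_mem_dualLattice_BW16_iff]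
  exact ⟨⟨1, 0, by simp⟩, by decide⟩

lemma norm_sq_intVec {n : ℕ} (u : Fin n → ℤ) : ‖intVec u‖ ^ 2 = ((u ⬝ᵥ u : ℤ) : ℝ) := by
  rw [EuclideanSpace.norm_sq_eq]
  simp [intVec, dotProduct, sq]

lemma latticeIsEven_BW16 : LatticeIsEven BW16 := by
  have hint : ∀ u : Fin 16 → ℤ, ∑ i, (u i : ZMod 2) = 0 → intVec u ∈ dualLattice BW16 :=
    fun _ => intVec_mem_dualLattice_BW16
  have hf := f0_mem_dualLattice_BW16
  rw [BW16_eq_span] at hint hf ⊢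
  apply latticeIsEven_span
  · rintro _ (⟨i, rfl⟩ | rfl | ⟨j, rfl⟩)
    · exact hint _ (by revert i; decide)
    · exact hf
    · exact hint _ (by revert j; decide)
  · rintro _ (⟨i, rfl⟩ | rfl | ⟨j, rfl⟩) <;> refine ⟨2, ?_⟩
    · have hi : ∀ i : Fin 16, (Pi.single i 2 : Fin 16 → ℤ) ⬝ᵥ Pi.single i 2 = 4 := by simp
      rw [norm_sq_intVec, hi]
      norm_num
    · rw [← signedHalf_one, norm_sq_signedHalf, one_dotProduct_one]
      norm_num
    · have hj : ∀ j, tetradWord j ⬝ᵥ tetradWord j = 4 := by decide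
      rw [norm_sq_intVec, hj]
      norm_num

lemma dvd_dotProduct_of_signedHalf_mem {d h : Fin 16 → ℤ} (hd : signedHalf d ∈ dualLattice BW16)
    (hh : signedHalf h ∈ BW16) : 4 ∣ d ⬝ᵥ h :=
  exists_inner_signedHalf_eq_intCast_iff.1 (hd _ hh)

lemma signedHalf_mem_BW16_iff {h : Fin 16 → ℤ} : signedHalf h ∈ BW16 ↔
    (∀ i, (h i : ZMod 2) = h 0) ∧ 4 ∣ 1 ⬝ᵥ h ∧ ∀ k, 4 ∣ coord k ⬝ᵥ h := by
  constructor
  · intro hh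
    refine ⟨fun i => ?_, dvd_dotProduct_of_signedHalf_mem ?_ hh,
      fun k => dvd_dotProduct_of_signedHalf_mem ?_ hh⟩
    · have hd : signedHalf (Pi.single i 2 - Pi.single 0 2) ∈ dualLattice BW16 := by
        rw [signedHalf_mem_dualLattice_BW16_iff]
        exact ⟨⟨0, 0, by revert i; decide⟩, by simp⟩
      have := dvd_dotProduct_of_signedHalf_mem hd hh
      rw [sub_dotProduct, single_dotProduct, single_dotProduct] at this
      rw [ZMod.intCast_eq_intCast_iff_dvd_sub]
      push_cast
      omega
    · rw [signedHalf_one]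
      exact f0_mem_dualLattice_BW16
    · rw [signedHalf_mem_dualLattice_BW16_iff]
      exact ⟨⟨0, Pi.single k 1, fun i => by simp [intCast_coord]⟩, by revert k; decide⟩
  · rintro ⟨hpar, hsum, hcoord⟩
    have hdvd (i : Fin 16) : (2 : ℤ) ∣ h i - h 0 :=
      (ZMod.intCast_eq_intCast_iff_dvd_sub _ _ 2).1 (hpar i).symm
    choose y hy using hdvd
    obtain ⟨t, y, rfl⟩ : ∃ (t : ℤ) (y : Fin 16 → ℤ), h = t • 1 + (2 : ℤ) • y :=
      ⟨h 0, y, funext fun i => by simpa [sub_eq_iff_eq_add'] using hy i⟩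
    have hone : ((1 : Fin 16 → ℤ) ⬝ᵥ 1) = 16 := by decide
    have hcoord_one : ∀ k, coord k ⬝ᵥ 1 = 8 := by decide
    simp only [dotProduct_add, dotProduct_smul, hone, hcoord_one, smul_eq_mul] at hsum hcoord
    rw [map_add, map_smul, signedHalf_one, signedHalf_two_smul]
    refine add_mem (Submodule.smul_mem _ _ f0_mem_BW16) (intVec_mem_BW16 ?_ fun k => ?_)
    · have h1 : (2 : ℤ) ∣ 1 ⬝ᵥ y := by omega
      simpa [dotProduct, intCast_sgn] using (ZMod.intCast_zmod_eq_zero_iff_dvd _ 2).2 h1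
    · have hk : (2 : ℤ) ∣ coord k ⬝ᵥ y := by have := hcoord k; omega
      simpa [dotProduct, intCast_sgn, intCast_coord, mul_comm] using
        (ZMod.intCast_zmod_eq_zero_iff_dvd _ 2).2 hk

end BarnesWall

section Label

lemma eight_le_dotProduct_self_of_isAffine {h : Fin 16 → ℤ} (hne : h ≠ 0)
    (haff : IsAffine fun i => (h i : ZMod 2)) (hsum : 4 ∣ 1 ⬝ᵥ h) : 8 ≤ h ⬝ᵥ h := by
  obtain ⟨a, c, hac⟩ := haff
  obtain heven | hodd := affine_eq_zero_or_eight_le_card a c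
  · choose y hy using fun i =>
      (ZMod.intCast_zmod_eq_zero_iff_dvd (h i) 2).1 ((hac i).trans (heven i))
    obtain rfl : h = (2 : ℤ) • y := funext hy
    have hyy : (2 : ℤ) ∣ y ⬝ᵥ y := by
      have hy1 : (2 : ℤ) ∣ 1 ⬝ᵥ y := by
        rw [dotProduct_smul, smul_eq_mul] at hsum
        omega
      rw [← Nat.cast_ofNat, ← ZMod.intCast_zmod_eq_zero_iff_dvd] at hy1 ⊢
      rw [dotProduct_self_intCast_zmod_two, hy1]
    have hpos : y ⬝ᵥ y ≠ 0 := by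
      rw [Ne, dotProduct_self_eq_zero]
      rintro rfl
      exact hne (smul_zero _)
    have hnonneg : 0 ≤ y ⬝ᵥ y := Finset.sum_nonneg fun i _ => mul_self_nonneg (y i)
    rw [smul_dotProduct, dotProduct_smul, smul_eq_mul, smul_eq_mul]
    omega
  · refine le_trans ?_ (card_odd_le_dotProduct_self h)
    simp only [hac]
    exact_mod_cast hodd

lemma two_le_norm_sq_of_mem_dualLattice_BW16 {x : E 16} (hx : x ∈ dualLattice BW16)
    (hx0 : x ≠ 0) : 2 ≤ ‖x‖ ^ 2 := by
  obtain ⟨h, rfl⟩ := exists_signedHalf_eq hx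
  obtain ⟨haff, hsum⟩ := signedHalf_mem_dualLattice_BW16_iff.1 hx
  have hh : h ≠ 0 := by
    rintro rfl
    exact hx0 (map_zero _)
  have h8 : (8 : ℝ) ≤ (h ⬝ᵥ h : ℤ) := by
    exact_mod_cast eight_le_dotProduct_self_of_isAffine hh haff hsum
  rw [norm_sq_signedHalf]
  linarith

/-- The label `(c, s)` of the coset of `signedHalf h` in `BW16♯/BW16`: `c` is the linear part of
the parities of `h`, and `2 * s k` is `coord k ⬝ᵥ h` modulo `4`. -/
structure HasLabel (h : Fin 16 → ℤ) (b : Bits × Bits) : Prop where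
  parity : ∃ a : ZMod 2, ∀ i, (h i : ZMod 2) = a + b.1 ⬝ᵥ bits i
  sum : 4 ∣ 1 ⬝ᵥ h
  moment : ∀ k, (4 : ℤ) ∣ coord k ⬝ᵥ h - 2 * (b.2 k).val

lemma HasLabel.signedHalf_mem_dualLattice {h : Fin 16 → ℤ} {b : Bits × Bits}
    (hb : HasLabel h b) : signedHalf h ∈ dualLattice BW16 :=
  signedHalf_mem_dualLattice_BW16_iff.2 ⟨hb.parity.imp fun _ ha => ⟨b.1, ha⟩, hb.sum⟩

lemma coord_dotProduct_affine : ∀ (k : Fin 4) (a : ZMod 2) (c : Bits),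
    (fun i => bits i k) ⬝ᵥ (fun i => a + c ⬝ᵥ bits i) = 0 := by
  decide +kernel

lemma exists_hasLabel {h : Fin 16 → ℤ} (hh : signedHalf h ∈ dualLattice BW16) :
    ∃ b, HasLabel h b := by
  obtain ⟨⟨a, c, hac⟩, hsum⟩ := signedHalf_mem_dualLattice_BW16_iff.1 hh
  have heven (k : Fin 4) : (2 : ℤ) ∣ coord k ⬝ᵥ h := by
    rw [← Nat.cast_ofNat, ← ZMod.intCast_zmod_eq_zero_iff_dvd, ← coord_dotProduct_affine k a c,
      ← funext hac]
    simp [dotProduct, intCast_coord]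
  choose q hq using heven
  refine ⟨(c, fun k => (q k : ZMod 2)), ⟨a, hac⟩, hsum, fun k => ?_⟩
  rw [hq, ZMod.val_intCast]
  omega

lemma signedHalf_sub_mem_BW16_iff {h h' : Fin 16 → ℤ} {b b' : Bits × Bits} (hb : HasLabel h b)
    (hb' : HasLabel h' b') : signedHalf h - signedHalf h' ∈ BW16 ↔ b = b' := by
  obtain ⟨a, ha⟩ := hb.parity
  obtain ⟨a', ha'⟩ := hb'.parity
  have hlin : (∀ i, ((h i - h' i : ℤ) : ZMod 2) = (h 0 - h' 0 : ℤ)) ↔ b.1 = b'.1 := by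
    have hdiff (i : Fin 16) : ((h i - h' i : ℤ) : ZMod 2) = a - a' + (b.1 - b'.1) ⬝ᵥ bits i := by
      rw [Int.cast_sub, ha, ha', sub_dotProduct]
      ring
    simp only [hdiff, bits_zero, dotProduct_zero, add_right_inj]
    refine ⟨fun hc => sub_eq_zero.1 (eq_zero_of_forall_dotProduct_bits_eq_zero _ hc), fun hc => ?_⟩
    simp [hc]
  have hmoment : (∀ k, 4 ∣ coord k ⬝ᵥ (h - h')) ↔ b.2 = b'.2 := by
    rw [funext_iff]
    refine forall_congr' fun k => ?_
    rw [dotProduct_sub, ← (ZMod.val_injective 2).eq_iff]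
    have := hb.moment k
    have := hb'.moment k
    have := (b.2 k).val_lt
    have := (b'.2 k).val_lt
    omega
  have hsum : 4 ∣ 1 ⬝ᵥ (h - h') := by
    rw [dotProduct_sub]
    exact dvd_sub hb.sum hb'.sum
  rw [← map_sub, signedHalf_mem_BW16_iff, Prod.ext_iff, ← hlin, ← hmoment]
  simp only [Pi.sub_apply, hsum, true_and]

end Label

section ShortVector

/-- The indicator, with values in `{0, 1} ⊆ ℤ`, of the complement of the kernel of the linear form
`c`. -/
def linearWord (c : Bits) : Fin 16 → ℤ := fun i => (c ⬝ᵥ bits i).val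

/-- The indicator of the point `w` of `𝔽₂⁴`. -/
def pointWord (w : Bits) : Fin 16 → ℤ := fun i => if bits i = w then 1 else 0

lemma card_bits_eq : ∀ w, Finset.card {i | bits i = w} = 1 := by
  decide

lemma dotProduct_pointWord (f : Bits → ℤ) (w : Bits) :
    (fun i => f (bits i)) ⬝ᵥ pointWord w = f w := by
  have hterm (i : Fin 16) : f (bits i) * pointWord w i = if bits i = w then f w else 0 := by
    rw [pointWord, mul_ite, mul_one, mul_zero]
    split_ifs with hi
    · rw [hi]
    · rfl
  simp only [dotProduct, hterm]
  rw [← Finset.sum_filter, Finset.sum_const, card_bits_eq, one_smul]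

lemma one_dotProduct_linearWord : ∀ c, 1 ⬝ᵥ linearWord c = if c = 0 then 0 else 8 := by
  decide +kernel

lemma linearWord_dotProduct_self :
    ∀ c, linearWord c ⬝ᵥ linearWord c = if c = 0 then 0 else 8 := by
  decide +kernel

lemma four_dvd_coord_dotProduct_linearWord : ∀ k c, 4 ∣ coord k ⬝ᵥ linearWord c := by
  decide +kernel

/-- The basis vector of `𝔽₂⁴` at the first nonzero entry of `c`, as a choice of a point where the
linear form `c ≠ 0` does not vanish. -/
def pivot (c : Bits) : Bits := fun k => if c k = 1 ∧ ∀ j < k, c j = 0 then 1 else 0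

lemma dotProduct_pivot : ∀ c : Bits, c ≠ 0 → c ⬝ᵥ pivot c = 1 := by
  decide

/-- A short vector with label `(c, s)`, obtained from `linearWord c` by changing, if `s ≠ 0`, the
entries at two points with difference `s`. If `c ≠ 0`, then the entry at `pivot c` only changes
from `1` to `-1`. -/
def shortVec (b : Bits × Bits) : Fin 16 → ℤ :=
  if b.2 = 0 then linearWord b.1
  else linearWord b.1 - (2 : ℤ) • (pointWord (pivot b.1) + pointWord (pivot b.1 + b.2))

/-- The minimal norm of the coset with label `b`. -/
def cosetNorm (b : Bits × Bits) : ℕ := if b = 0 then 0 else 2 + (b.1 ⬝ᵥ b.2).val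

lemma hasLabel_shortVec (b : Bits × Bits) : HasLabel (shortVec b) b where
  parity := by
    refine ⟨0, fun i => ?_⟩
    have h2 : (2 : ZMod 2) = 0 := rfl
    unfold shortVec
    split_ifs <;> simp [linearWord, h2]
  sum := by
    have hpoint : ∀ w, 1 ⬝ᵥ pointWord w = 1 := dotProduct_pointWord fun _ => 1
    have hlin : (4 : ℤ) ∣ 1 ⬝ᵥ linearWord b.1 := by
      rw [one_dotProduct_linearWord]
      split_ifs <;> decide
    unfold shortVec
    split_ifs
    · exact hlin
    · rw [dotProduct_sub, dotProduct_smul, dotProduct_add, hpoint, hpoint]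
      exact dvd_sub hlin (by decide)
  moment k := by
    have hpoint : ∀ w, coord k ⬝ᵥ pointWord w = (w k).val :=
      dotProduct_pointWord fun x => (x k).val
    have hlin := four_dvd_coord_dotProduct_linearWord k b.1
    have hval : ∀ x y : ZMod 2, 2 ∣ x.val + (x + y).val + y.val := by decide
    have := hval (pivot b.1 k) (b.2 k)
    unfold shortVec
    split_ifs with hs
    · simpa [hs] using hlin
    · rw [dotProduct_sub, dotProduct_smul, dotProduct_add, hpoint, hpoint, smul_eq_mul,
        Pi.add_apply]
      omega

lemma shortVec_dotProduct_self (b : Bits × Bits) :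
    shortVec b ⬝ᵥ shortVec b = 4 * cosetNorm b := by
  obtain ⟨c, s⟩ := b
  have hlin (w : Bits) : linearWord c ⬝ᵥ pointWord w = (c ⬝ᵥ w).val :=
    dotProduct_pointWord (fun x => (c ⬝ᵥ x).val) w
  have hpoint (v w : Bits) : pointWord v ⬝ᵥ pointWord w = if w = v then 1 else 0 :=
    dotProduct_pointWord (fun x => if x = v then 1 else 0) w
  have hsq (hs : s ≠ 0) : shortVec (c, s) ⬝ᵥ shortVec (c, s) =
      linearWord c ⬝ᵥ linearWord c + 8
        - 4 * ((c ⬝ᵥ pivot c).val + (c ⬝ᵥ (pivot c + s)).val) := by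
    simp only [shortVec, if_neg hs, sub_dotProduct, dotProduct_sub, smul_dotProduct,
      dotProduct_smul, add_dotProduct, dotProduct_add, dotProduct_comm _ (linearWord c), hlin,
      hpoint, add_eq_left, left_eq_add, if_true, smul_eq_mul]
    ring
  by_cases hs : s = 0
  · by_cases hc : c = 0 <;> simp [shortVec, cosetNorm, linearWord_dotProduct_self, hs, hc]
  · rw [hsq hs, linearWord_dotProduct_self, cosetNorm]
    by_cases hc : c = 0
    · simp [hs, hc]
    · have hval : ∀ x : ZMod 2, ((1 + x).val : ℤ) = 1 - x.val := by decide
      rw [dotProduct_add, dotProduct_pivot c hc, hval, ZMod.val_one, if_neg hc,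
        if_neg (by simp [hc])]
      push_cast
      ring

lemma norm_sq_signedHalf_shortVec (b : Bits × Bits) :
    ‖signedHalf (shortVec b)‖ ^ 2 = cosetNorm b := by
  rw [norm_sq_signedHalf, shortVec_dotProduct_self]
  push_cast
  ring

/-- The class of `BW16♯/BW16` with label `b`. -/
def shortClass (b : Bits × Bits) : DualQuot BW16 :=
  Submodule.Quotient.mk ⟨signedHalf (shortVec b), (hasLabel_shortVec b).signedHalf_mem_dualLattice⟩

lemma shortClass_bijective : shortClass.Bijective := by
  constructor
  · intro b b' hbb
    exact (signedHalf_sub_mem_BW16_iff (hasLabel_shortVec b) (hasLabel_shortVec b')).1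
      (mk_eq_mk_iff_sub_mem.1 hbb)
  · intro q
    obtain ⟨⟨x, hx⟩, rfl⟩ := Submodule.Quotient.mk_surjective _ q
    obtain ⟨h, rfl⟩ := exists_signedHalf_eq hx
    obtain ⟨b, hb⟩ := exists_hasLabel hx
    exact ⟨b, mk_eq_mk_iff_sub_mem.2 ((signedHalf_sub_mem_BW16_iff (hasLabel_shortVec b) hb).2 rfl)⟩

lemma shortClass_zero : shortClass 0 = 0 := by
  have h0 : shortVec 0 = 0 := by decide
  simp only [shortClass, h0, map_zero]
  rfl

lemma cosetMinNorm_shortClass (b : Bits × Bits) :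
    CosetMinNorm BW16 (shortClass b) (cosetNorm b) := by
  obtain rfl | hb := eq_or_ne b 0
  · simpa [shortClass_zero, cosetNorm] using cosetMinNorm_zero BW16
  · have hlt : cosetNorm b < 4 := by
      have := (b.1 ⬝ᵥ b.2).val_lt
      rw [cosetNorm, if_neg hb]
      omega
    rw [← norm_sq_signedHalf_shortVec]
    refine latticeIsEven_BW16.cosetMinNorm_mk (fun _ => two_le_norm_sq_of_mem_dualLattice_BW16)
      ?_ ?_
    · exact fun h => hb (shortClass_bijective.injective (h.trans shortClass_zero.symm))
    · rw [norm_sq_signedHalf_shortVec]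
      exact_mod_cast hlt

lemma cosetNorm_eq_two_or_three {b : Bits × Bits} (hb : b ≠ 0) :
    cosetNorm b = 2 ∨ cosetNorm b = 3 := by
  have := (b.1 ⬝ᵥ b.2).val_lt
  rw [cosetNorm, if_neg hb]
  omega

end ShortVector

/-- The quotient `BW₁₆♯/BW₁₆` has exactly 2⁸ = 256 elements: the zero coset,
135 cosets of minimal norm 2, and 120 cosets of minimal norm 3. -/
theorem BW16_dual_quotient_classes :
    Nat.card (DualQuot BW16) = 256 ∧
    (∀ c : DualQuot BW16, c = 0 ∨ CosetMinNorm BW16 c 2 ∨ CosetMinNorm BW16 c 3) ∧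
    {c : DualQuot BW16 | CosetMinNorm BW16 c 2}.ncard = 135 ∧
    {c : DualQuot BW16 | CosetMinNorm BW16 c 3}.ncard = 120 := by
  have hcount (m : ℕ) : {c : DualQuot BW16 | CosetMinNorm BW16 c m}.ncard =
      Finset.card {b | cosetNorm b = m} := by
    rw [ncard_setOf_cosetMinNorm shortClass_bijective cosetMinNorm_shortClass,
      ← Set.ncard_coe_finset]
    simp
  refine ⟨?_, fun c => ?_, ?_, ?_⟩
  · rw [← Nat.card_eq_of_bijective _ shortClass_bijective]
    simp [Bits]
  · obtain ⟨b, rfl⟩ := shortClass_bijective.surjective c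
    obtain rfl | hb := eq_or_ne b 0
    · exact Or.inl shortClass_zero
    · have hmin := cosetMinNorm_shortClass b
      obtain h2 | h3 := cosetNorm_eq_two_or_three hb
      · exact Or.inr (Or.inl (by simpa [h2] using hmin))
      · exact Or.inr (Or.inr (by simpa [h3] using hmin))
  · exact (hcount 2).trans (by decide +kernel)
  · exact (hcount 3).trans (by decide +kernel)
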